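/- For every nonnegative integer k: the group W is finite, and in the group algebra ℤ[ℤ^7] one has 𝒜(Z^ϱ) · WGF(L7(k);Z) = 𝒜(Z^{kω_1 + ϱ}). (By the Weyl character formula, this says that the weight generating function of L7(k) equals the character char_{E7}(kω_1) of the irreducible highest-weight-kω_1 representation of the type E7 simple Lie algebra.) -/

import Mathlib

noncomputable section

namespace CL

variable {N : Type} [DecidableEq N] [Fintype N]

/-- One-step relation generating the partial order on the poset of positions. -/
def step (adj : N → N → Prop) (pos : Finset (N × ℕ)) (x y : N × ℕ) : Prop :=
  x ∈ pos ∧ y ∈ pos ∧ adj x.1 y.1 ∧ y.2 = x.2 + 1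

/-- The partial order on positions, generated by `step`. -/
def ple (adj : N → N → Prop) (pos : Finset (N × ℕ)) : N × ℕ → N × ℕ → Prop :=
  Relation.ReflTransGen (step adj pos)

/-- The lattice of `ℕ`-labellings of the positions which are bounded by `k`, order-reversing,
and satisfy a further constraint `extra`. -/
def Elt (adj : N → N → Prop) (pos : Finset (N × ℕ)) (k : ℕ)
    (extra : ({x : N × ℕ // x ∈ pos} → ℕ) → Prop) : Type :=
  {c : {x : N × ℕ // x ∈ pos} → ℕ //
    (∀ x, c x ≤ k) ∧ (∀ x y, ple adj pos y.1 x.1 → c x ≤ c y) ∧ extra c}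

variable {adj : N → N → Prop} {pos : Finset (N × ℕ)} {k : ℕ}
  {extra : ({x : N × ℕ // x ∈ pos} → ℕ) → Prop}

instance : Finite (Elt adj pos k extra) := by
  apply Finite.of_injective
    (fun c : Elt adj pos k extra =>
      fun x => (⟨c.1 x, Nat.lt_succ_of_le (c.2.1 x)⟩ : Fin (k + 1)))
  intro c d h
  apply Subtype.ext
  funext x
  exact congrArg Fin.val (congrFun h x)

instance : Fintype (Elt adj pos k extra) := Fintype.ofFinite _

instance : DecidableEq (Elt adj pos k extra) := by unfold Elt; infer_instance

/-- Componentwise comparison of labellings. -/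
def elLe (r s : Elt adj pos k extra) : Prop := ∀ x, r.1 x ≤ s.1 x

/-- The covering edge of color `i`: exactly one entry, at a position of color `i`,
is increased by one. -/
def edge (i : N) (r s : Elt adj pos k extra) : Prop :=
  ∃ x : {x : N × ℕ // x ∈ pos}, x.1.1 = i ∧ s.1 x = r.1 x + 1 ∧
    ∀ y, y ≠ x → s.1 y = r.1 y

instance (i : N) (r s : Elt adj pos k extra) : Decidable (edge i r s) := by
  unfold edge; infer_instance

/-- The rank function: the sum of all entries. -/
def rk (t : Elt adj pos k extra) : ℕ := ∑ x ∈ pos.attach, t.1 x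

/-- The connected component of `t` in the graph of color-`i` covering edges. -/
def comp (i : N) (t : Elt adj pos k extra) : Set (Elt adj pos k extra) :=
  {s | Relation.ReflTransGen (fun a b => edge i a b ∨ edge i b a) t s}

/-- The integer `m_i(t) = (ρ(t) − min ρ on comp_i(t)) − (max ρ on comp_i(t) − ρ(t))`. -/
def mwt (i : N) (t : Elt adj pos k extra) : ℤ :=
  ((rk t : ℤ) - ((sInf (rk '' comp i t) : ℕ) : ℤ)) -
    (((sSup (rk '' comp i t) : ℕ) : ℤ) - (rk t : ℤ))

end CL

namespace CL

variable {N : Type} [DecidableEq N] [Fintype N]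

/-- The matrix of the simple reflection `S_i : μ ↦ μ − μ_i·(row i of A)`, acting via `mulVec`. -/
def refl (A : N → N → ℤ) (i : N) : Matrix N N ℤ :=
  fun j l => (if j = l then 1 else 0) - (if l = i then A i j else 0)

/-- The Weyl group: the group of integer matrices generated by the simple reflections
(each `S_i` is an involution, so the generated submonoid is a group). -/
def weyl (A : N → N → ℤ) : Submonoid (Matrix N N ℤ) :=
  Submonoid.closure (Set.range (refl A))

/-- The alternant `𝒜(Z^ν) = Σ_{w∈W} det(w)·Z^{w(ν)}` in the group algebra `ℤ[ℤ^N]`. -/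
def alt (A : N → N → ℤ) (ν : N → ℤ) : AddMonoidAlgebra ℤ (N → ℤ) :=
  ∑ᶠ w ∈ (weyl A : Set (Matrix N N ℤ)),
    AddMonoidAlgebra.single (Matrix.mulVec w ν) (Matrix.det w)

end CL

namespace CL

variable {N : Type} [DecidableEq N] [Fintype N]

/-- The weight generating function `WGF(L;Z) = Σ_{t∈L} Z^{wt(t)}` in `ℤ[ℤ^N]`. -/
def wgf (adj : N → N → Prop) (pos : Finset (N × ℕ)) (k : ℕ)
    (extra : ({x : N × ℕ // x ∈ pos} → ℕ) → Prop) : AddMonoidAlgebra ℤ (N → ℤ) :=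
  ∑ t : Elt adj pos k extra, AddMonoidAlgebra.single (fun i => mwt i t) 1

end CL

/-! ### Type `E₇` data -/

/-- The nodes `1, 2, 3, 4, 5, 5', 6'` of the `E₇` Dynkin diagram. -/
inductive N7 : Type
  | n1 | n2 | n3 | n4 | n5 | n5p | n6p
  deriving DecidableEq

instance instFintypeN7 : Fintype N7 where
  elems := {N7.n1, N7.n2, N7.n3, N7.n4, N7.n5, N7.n5p, N7.n6p}
  complete := by intro x; cases x <;> decide

open N7

/-- Adjacency in the `E₇` Dynkin diagram: edges `1-2, 2-3, 3-4, 4-5, 4-5', 5'-6'`. -/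
abbrev adj7 : N7 → N7 → Prop := fun a b =>
  (a, b) ∈ ([(n1, n2), (n2, n3), (n3, n4), (n4, n5), (n4, n5p), (n5p, n6p)] : List (N7 × N7)) ∨
  (b, a) ∈ ([(n1, n2), (n2, n3), (n3, n4), (n4, n5), (n4, n5p), (n5p, n6p)] : List (N7 × N7))

/-- The 27 (color, rank) positions of the minuscule poset `P₇ = P_{E₇}(ω₁)`. -/
def pos7 : Finset (N7 × ℕ) :=
  {(n1, 0), (n2, 1), (n3, 2), (n4, 3), (n5, 4), (n5p, 4), (n4, 5), (n6p, 5), (n3, 6),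
   (n5p, 6), (n2, 7), (n4, 7), (n1, 8), (n3, 8), (n5, 8), (n2, 9), (n4, 9), (n3, 10),
   (n5p, 10), (n4, 11), (n6p, 11), (n5, 12), (n5p, 12), (n4, 13), (n3, 14), (n2, 15), (n1, 16)}

/-- The lattice `L7(k) = L_{E₇}(kω₁)` of order-reversing labellings of `P₇` by `{0,…,k}`. -/
abbrev L7 (k : ℕ) : Type := CL.Elt adj7 pos7 k (fun _ => True)

/-- The Cartan matrix of type `E₇`, indexed by the nodes. -/
def A7 : N7 → N7 → ℤ := fun i j => if i = j then 2 else if adj7 i j then -1 else 0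

/-! The lattice `L(k)` consists of the multichains of `k` order ideals ("layers") of the poset,
weights are additive over layers, and `L(1)` carries the weights of a minuscule representation: all
entries lie in `{-1, 0, 1}`, and raising a label of color `i` adds the simple root `α_i`.

Reflecting all labels of color `i` in their intervals of admissible values realizes `S_i` on
weights. Hence `W` permutes the terms of the generating function, and
`𝒜(Z^ϱ) · WGF = ∑ₜ 𝒜(Z^{wt(t) + ϱ})`. For a labelling other than the top one, add up the weights of
the layers from the top down until, for the first time, the sum fails to be dominant; since entries
drop by at most one at a time, some entry `i` of the sum is then `-1`. Reflecting the color `i` in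
the layers below only is an involution, and it moves `wt(t) + ϱ` by `S_i`, so the terms other than
that of the top labelling cancel in pairs (a sign-reversing involution in the style of Stembridge).

That `L(1)` is minuscule follows from local axioms on the colored poset, which for `P₇` are a finite
check. -/

namespace CL

section Labelling

variable {N : Type} {adj : N → N → Prop} {pos : Finset (N × ℕ)} {k : ℕ}

/-- The lattice `L(k)` of all order-reversing labellings of the positions by `{0, …, k}`: the
labellings `Elt` without a further constraint. -/
abbrev Labelling (adj : N → N → Prop) (pos : Finset (N × ℕ)) (k : ℕ) : Type :=
  Elt adj pos k fun _ => True

namespace Labelling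

lemma ext {s t : Labelling adj pos k} (h : ∀ x, s.1 x = t.1 x) : s = t :=
  Subtype.ext (funext h)

lemma apply_le_of_step (t : Labelling adj pos k) {x y : pos} (h : step adj pos x y) :
    t.1 y ≤ t.1 x :=
  t.2.2.1 y x (.single h)

/-- A labelling, given by a function that is order-reversing along each `step`. -/
def ofStep (c : pos → ℕ) (hk : ∀ x, c x ≤ k)
    (hc : ∀ x y : pos, step adj pos x y → c y ≤ c x) : Labelling adj pos k := by
  refine ⟨c, hk, fun x y hyx => ?_, trivial⟩
  suffices ∀ p : N × ℕ, ple adj pos y p → ∀ hp : p ∈ pos, c ⟨p, hp⟩ ≤ c y from this x hyx x.2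
  intro p hp
  induction hp with
  | refl => exact fun _ => le_rfl
  | tail _ hstep ih => exact fun hp => (hc ⟨_, hstep.1⟩ ⟨_, hp⟩ hstep).trans (ih hstep.1)

/-- The constant labelling with value `m`. -/
def const (adj : N → N → Prop) (pos : Finset (N × ℕ)) {k m : ℕ} (hm : m ≤ k) :
    Labelling adj pos k :=
  ofStep (fun _ => m) (fun _ => hm) fun _ _ _ => le_rfl

/-- The `0`-`1` labelling marking the positions whose label in `t` exceeds `r`. The layers
`0, …, k - 1` form a multichain of order ideals equivalent to `t`. -/
def layer (r : ℕ) (t : Labelling adj pos k) : Labelling adj pos 1 :=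
  ofStep (fun x => if r < t.1 x then 1 else 0) (fun x => by split_ifs <;> simp) fun x y hxy => by
    have := t.apply_le_of_step hxy
    split_ifs <;> omega

/-- The labelling whose labels are those of `t`, cut off at `q`. -/
def trunc (q : ℕ) (t : Labelling adj pos k) : Labelling adj pos q :=
  ofStep (fun x => min (t.1 x) q) (fun _ => min_le_right _ _)
    fun _ _ hxy => min_le_min_right q (t.apply_le_of_step hxy)

lemma layer_apply (r : ℕ) (t : Labelling adj pos k) (x : pos) :
    (t.layer r).1 x = if r < t.1 x then 1 else 0 := rfl

lemma trunc_apply (q : ℕ) (t : Labelling adj pos k) (x : pos) :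
    (t.trunc q).1 x = min (t.1 x) q := rfl

lemma layer_trunc {q r : ℕ} (h : r < q) (t : Labelling adj pos k) :
    (t.trunc q).layer r = t.layer r :=
  ext fun x => by simp [layer_apply, trunc_apply, h]

open Classical in
/-- The least label `x` may carry when all other labels are those of `t`. -/
def lo (t : Labelling adj pos k) (x : pos) : ℕ :=
  ({y | step adj pos x y} : Finset pos).sup t.1

open Classical in
/-- The greatest label `x` may carry when all other labels are those of `t`. -/
def hi (t : Labelling adj pos k) (x : pos) : ℕ :=
  ({y | step adj pos y x} : Finset pos).fold min k t.1

lemma lo_le_iff {t : Labelling adj pos k} {x : pos} {b : ℕ} :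
    t.lo x ≤ b ↔ ∀ y : pos, step adj pos x y → t.1 y ≤ b := by
  simp [lo]

lemma le_hi_iff {t : Labelling adj pos k} {x : pos} {b : ℕ} :
    b ≤ t.hi x ↔ b ≤ k ∧ ∀ y : pos, step adj pos y x → b ≤ t.1 y := by
  simp [hi, Finset.le_fold_min]

lemma apply_le_lo (t : Labelling adj pos k) {x y : pos} (h : step adj pos x y) :
    t.1 y ≤ t.lo x :=
  lo_le_iff.1 le_rfl y h

lemma hi_le_apply (t : Labelling adj pos k) {x y : pos} (h : step adj pos y x) :
    t.hi x ≤ t.1 y :=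
  (le_hi_iff.1 le_rfl).2 y h

lemma hi_le (t : Labelling adj pos k) (x : pos) : t.hi x ≤ k :=
  (le_hi_iff.1 le_rfl).1

lemma lo_le_apply (t : Labelling adj pos k) (x : pos) : t.lo x ≤ t.1 x :=
  lo_le_iff.2 fun _ => t.apply_le_of_step

lemma apply_le_hi (t : Labelling adj pos k) (x : pos) : t.1 x ≤ t.hi x :=
  le_hi_iff.2 ⟨t.2.1 x, fun _ => t.apply_le_of_step⟩

lemma lo_layer (r : ℕ) (t : Labelling adj pos k) (x : pos) :
    (t.layer r).lo x = if r < t.lo x then 1 else 0 := by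
  refine eq_of_forall_ge_iff fun b => ?_
  have hlo : t.lo x ≤ r ↔ ∀ y : pos, step adj pos x y → t.1 y ≤ r := lo_le_iff
  rw [lo_le_iff]
  rcases b with _ | b
  · simp [layer_apply, hlo]
  · exact iff_of_true (fun y _ => ((t.layer r).2.1 y).trans (by omega)) (by split_ifs <;> omega)

lemma hi_layer {r : ℕ} (hr : r < k) (t : Labelling adj pos k) (x : pos) :
    (t.layer r).hi x = if r < t.hi x then 1 else 0 := by
  refine eq_of_forall_le_iff fun b => ?_
  have hhi : r + 1 ≤ t.hi x ↔ r + 1 ≤ k ∧ ∀ y : pos, step adj pos y x → r + 1 ≤ t.1 y := le_hi_iff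
  rw [le_hi_iff]
  rcases b with _ | _ | b
  · simp
  · simp only [layer_apply]
    grind
  · exact iff_of_false (by omega) (by split_ifs <;> omega)

/-- A position of least rank among those with label `< k` still has all labels below it
equal to `k`. -/
lemma exists_apply_lt_hi (t : Labelling adj pos k) (h : ∃ x, t.1 x ≠ k) :
    ∃ x, t.1 x < t.hi x := by
  obtain ⟨x, hx, hmin⟩ := Set.exists_min_image {x | t.1 x ≠ k} (fun x => x.1.2)
    (Set.toFinite _) h
  refine ⟨x, lt_of_lt_of_le (lt_of_le_of_ne (t.2.1 x) hx) (le_hi_iff.2 ⟨le_rfl, fun y hyx => ?_⟩)⟩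
  by_contra hy
  have := hmin y (fun hyk => hy hyk.ge)
  have := hyx.2.2.2
  omega

lemma exists_lo_lt_apply (t : Labelling adj pos k) (h : ∃ x, t.1 x ≠ 0) :
    ∃ x, t.lo x < t.1 x := by
  obtain ⟨x, hx, hmax⟩ := Set.exists_max_image {x | t.1 x ≠ 0} (fun x => x.1.2)
    (Set.toFinite _) h
  refine ⟨x, lt_of_le_of_lt (lo_le_iff.2 fun y hxy => ?_) (Nat.pos_of_ne_zero hx)⟩
  by_contra hy
  have := hmax y (fun hy0 => hy hy0.le)
  have := hxy.2.2.2
  omega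

lemma rk_eq_sum (t : Labelling adj pos k) : rk t = ∑ x, t.1 x := by
  rw [rk, Finset.univ_eq_attach]

lemma sum_mul_of_edge {i : N} {s t : Labelling adj pos k} (h : edge i s t) (f : N → ℤ) :
    ∑ x, (t.1 x : ℤ) * f x.1.1 = ∑ x, (s.1 x : ℤ) * f x.1.1 + f i := by
  classical
  obtain ⟨x, rfl, hx, hne⟩ := h
  rw [← Finset.add_sum_erase _ _ (Finset.mem_univ x),
    ← Finset.add_sum_erase (a := x) _ (fun x => (s.1 x : ℤ) * f x.1.1) (Finset.mem_univ x),
    Finset.sum_congr rfl fun y hy => by rw [hne y (Finset.ne_of_mem_erase hy)], hx]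
  push_cast
  ring

lemma rk_of_edge {i : N} {s t : Labelling adj pos k} (h : edge i s t) : rk t = rk s + 1 := by
  have := sum_mul_of_edge h 1
  simp only [Pi.one_apply, mul_one] at this
  rw [rk_eq_sum, rk_eq_sum]
  exact_mod_cast this

lemma apply_eq_of_mem_comp {i : N} {s t : Labelling adj pos k} (h : s ∈ comp i t) {x : pos}
    (hx : x.1.1 ≠ i) : s.1 x = t.1 x := by
  have apply_eq {a b : Labelling adj pos k} : edge i a b → b.1 x = a.1 x := by
    rintro ⟨y, hy, -, hne⟩
    exact hne x fun hxy => hx (hxy ▸ hy)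
  induction (h : Relation.ReflTransGen _ t s) with
  | refl => rfl
  | tail _ hab ih => exact (hab.elim apply_eq fun hba => (apply_eq hba).symm).trans ih

lemma lo_congr {s t : Labelling adj pos k} {x : pos}
    (h : ∀ y : pos, step adj pos x y → s.1 y = t.1 y) : s.lo x = t.lo x :=
  Finset.sup_congr rfl fun y hy => h y (by simpa using hy)

lemma hi_congr {s t : Labelling adj pos k} {x : pos}
    (h : ∀ y : pos, step adj pos y x → s.1 y = t.1 y) : s.hi x = t.hi x :=
  Finset.fold_congr fun y hy => h y (by simpa using hy)

lemma sum_range_ite_lt {n k : ℕ} (h : n ≤ k) :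
    ∑ r ∈ Finset.range k, (if r < n then 1 else 0) = n := by
  rw [← Finset.sum_filter, Finset.sum_const, smul_eq_mul, mul_one,
    show {r ∈ Finset.range k | r < n} = Finset.range n by grind, Finset.card_range]

lemma sum_layer_apply (t : Labelling adj pos k) (x : pos) :
    ∑ r ∈ Finset.range k, (t.layer r).1 x = t.1 x :=
  sum_range_ite_lt (t.2.1 x)

lemma sum_lo_layer (t : Labelling adj pos k) (x : pos) :
    ∑ r ∈ Finset.range k, (t.layer r).lo x = t.lo x := by
  simp_rw [lo_layer]
  exact sum_range_ite_lt ((t.lo_le_apply x).trans (t.2.1 x))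

lemma sum_hi_layer (t : Labelling adj pos k) (x : pos) :
    ∑ r ∈ Finset.range k, (t.layer r).hi x = t.hi x := by
  rw [Finset.sum_congr rfl fun r hr => hi_layer (Finset.mem_range.1 hr) t x]
  exact sum_range_ite_lt (t.hi_le x)

section Recoloring

variable [Std.Irrefl adj]

lemma color_ne_of_step {x y : N × ℕ} (h : step adj pos x y) : x.1 ≠ y.1 := fun he =>
  Std.Irrefl.irrefl (r := adj) _ (he ▸ h.2.2.1)

/-- Replace the labels of color `i` by the values of `f`. Positions of equal color impose no
condition on each other, so it suffices that each new label lies in its own interval. -/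
def relabel [DecidableEq N] (i : N) (t : Labelling adj pos k) (f : pos → ℕ)
    (hf : ∀ x : pos, x.1.1 = i → f x ∈ Set.Icc (t.lo x) (t.hi x)) : Labelling adj pos k :=
  ofStep (fun x => if x.1.1 = i then f x else t.1 x)
    (fun x => by
      split_ifs with hx
      exacts [(hf x hx).2.trans (t.hi_le x), t.2.1 x])
    (fun x y hxy => by
      split_ifs with hy hx hx
      · exact absurd (hx.trans hy.symm) (color_ne_of_step hxy)
      · exact (hf y hy).2.trans (t.hi_le_apply hxy)
      · exact (t.apply_le_lo hxy).trans (hf x hx).1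
      · exact t.apply_le_of_step hxy)

lemma exists_relabel_single (t : Labelling adj pos k) {x : pos} {m : ℕ}
    (hm : m ∈ Set.Icc (t.lo x) (t.hi x)) :
    ∃ s : Labelling adj pos k, s.1 x = m ∧ ∀ y, y ≠ x → s.1 y = t.1 y := by
  classical
  refine ⟨t.relabel x.1.1 (Function.update t.1 x m) fun y _ => ?_, ?_, fun y hy => ?_⟩
  · rcases eq_or_ne y x with rfl | hy
    · rwa [Function.update_self]
    · rw [Function.update_of_ne hy]
      exact ⟨t.lo_le_apply y, t.apply_le_hi y⟩
  · simp [relabel, ofStep]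
  · simp [relabel, ofStep, Function.update_of_ne hy]

lemma exists_edge_to (t : Labelling adj pos k) {x : pos} (h : t.lo x < t.1 x) :
    ∃ s : Labelling adj pos k, edge x.1.1 s t := by
  have := t.apply_le_hi x
  obtain ⟨s, hx, hne⟩ := t.exists_relabel_single (x := x) (m := t.1 x - 1) ⟨by omega, by omega⟩
  exact ⟨s, x, rfl, by omega, fun y hy => (hne y hy).symm⟩

/-- In the ideal of all positions of rank at most that of `x`, the position `x` is maximal. -/
lemma exists_edge (x : pos) : ∃ s t : Labelling adj pos 1, edge x.1.1 s t := by
  let t : Labelling adj pos 1 :=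
    ofStep (fun y => if y.1.2 ≤ x.1.2 then 1 else 0) (fun y => by split_ifs <;> simp)
      fun y z hyz => by
        have := hyz.2.2.2
        split_ifs <;> omega
  have hval (y : pos) : t.1 y = if y.1.2 ≤ x.1.2 then 1 else 0 := rfl
  have hlo : t.lo x ≤ 0 := lo_le_iff.2 fun y hxy => by
    have := hxy.2.2.2
    rw [hval, if_neg (by omega)]
  obtain ⟨s, hs⟩ := t.exists_edge_to (x := x) (by
    rw [hval, if_pos le_rfl]
    omega)
  exact ⟨s, t, hs⟩

lemma exists_edge_from (t : Labelling adj pos k) {x : pos} (h : t.1 x < t.hi x) :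
    ∃ s : Labelling adj pos k, edge x.1.1 t s := by
  have := t.lo_le_apply x
  obtain ⟨s, hx, hne⟩ := t.exists_relabel_single (x := x) (m := t.1 x + 1) ⟨by omega, by omega⟩
  exact ⟨s, x, rfl, hx, hne⟩

lemma apply_eq_lo_of_rk_eq_sInf {i : N} {s t : Labelling adj pos k} (hs : s ∈ comp i t)
    (hmin : rk s = sInf (rk '' comp i t)) {x : pos} (hx : x.1.1 = i) : s.1 x = t.lo x := by
  rw [← lo_congr fun y hy => apply_eq_of_mem_comp hs (hx ▸ (color_ne_of_step hy).symm)]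
  by_contra hne
  obtain ⟨r, hr⟩ := s.exists_edge_to (lt_of_le_of_ne (s.lo_le_apply x) (Ne.symm hne))
  rw [hx] at hr
  have hrc : r ∈ comp i t := Relation.ReflTransGen.tail hs (Or.inr hr)
  have := Nat.sInf_le (Set.mem_image_of_mem rk hrc)
  have := rk_of_edge hr
  omega

lemma apply_eq_hi_of_rk_eq_sSup {i : N} {s t : Labelling adj pos k} (hs : s ∈ comp i t)
    (hmax : rk s = sSup (rk '' comp i t)) {x : pos} (hx : x.1.1 = i) : s.1 x = t.hi x := by
  rw [← hi_congr fun y hy => apply_eq_of_mem_comp hs (hx ▸ color_ne_of_step hy)]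
  by_contra hne
  obtain ⟨r, hr⟩ := s.exists_edge_from (lt_of_le_of_ne (s.apply_le_hi x) hne)
  rw [hx] at hr
  have hrc : r ∈ comp i t := Relation.ReflTransGen.tail hs (Or.inl hr)
  have := le_csSup (Set.toFinite (rk '' comp i t)).bddAbove (Set.mem_image_of_mem rk hrc)
  have := rk_of_edge hr
  omega

lemma mwt_eq_sum [DecidableEq N] (i : N) (t : Labelling adj pos k) :
    mwt i t = ∑ x : pos with x.1.1 = i, (2 * (t.1 x : ℤ) - t.lo x - t.hi x) := by
  have hne : (rk '' comp i t).Nonempty := ⟨_, t, .refl, rfl⟩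
  obtain ⟨s, hs, hmin⟩ := Nat.sInf_mem hne
  obtain ⟨u, hu, hmax⟩ := Nat.sSup_mem hne (Set.toFinite _).bddAbove
  rw [mwt, ← hmin, ← hmax, rk_eq_sum, rk_eq_sum, rk_eq_sum, Finset.sum_filter]
  push_cast
  rw [← Finset.sum_sub_distrib, ← Finset.sum_sub_distrib, ← Finset.sum_sub_distrib]
  refine Finset.sum_congr rfl fun x _ => ?_
  split_ifs with hx
  · rw [apply_eq_lo_of_rk_eq_sInf hs hmin hx, apply_eq_hi_of_rk_eq_sSup hu hmax hx]
    ring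
  · rw [apply_eq_of_mem_comp hs hx, apply_eq_of_mem_comp hu hx]
    ring

/-- The weight `wt(t) = (m_i(t))_i`. -/
def wt (t : Labelling adj pos k) : N → ℤ := fun i => mwt i t

lemma wt_eq_sum_layer (t : Labelling adj pos k) :
    t.wt = ∑ r ∈ Finset.range k, (t.layer r).wt := by
  classical
  funext i
  rw [Finset.sum_apply]
  simp only [wt, mwt_eq_sum]
  rw [Finset.sum_comm]
  refine Finset.sum_congr rfl fun x _ => ?_
  rw [← sum_layer_apply, ← sum_lo_layer, ← sum_hi_layer]
  push_cast
  rw [Finset.mul_sum, Finset.sum_sub_distrib, Finset.sum_sub_distrib]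

variable [DecidableEq N]

/-- Reflect every label of color `i` in its interval of admissible values: the Weyl group acts on
weights through these flips. -/
def flipColor (i : N) (t : Labelling adj pos k) : Labelling adj pos k :=
  t.relabel i (fun x => t.lo x + t.hi x - t.1 x) fun x _ => by
    have := t.lo_le_apply x
    have := t.apply_le_hi x
    exact ⟨by omega, by omega⟩

lemma flipColor_apply_of_eq {i : N} (t : Labelling adj pos k) {x : pos} (hx : x.1.1 = i) :
    (t.flipColor i).1 x = t.lo x + t.hi x - t.1 x := if_pos hx

lemma flipColor_apply_of_ne {i : N} (t : Labelling adj pos k) {x : pos} (hx : x.1.1 ≠ i) :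
    (t.flipColor i).1 x = t.1 x := if_neg hx

lemma flipColor_flipColor (i : N) (t : Labelling adj pos k) : (t.flipColor i).flipColor i = t := by
  refine ext fun x => ?_
  by_cases hx : x.1.1 = i
  · have hne (y : pos) (hy : y.1.1 ≠ x.1.1) : (t.flipColor i).1 y = t.1 y :=
      t.flipColor_apply_of_ne (hx ▸ hy)
    have hlo : (t.flipColor i).lo x = t.lo x :=
      lo_congr fun y hy => hne y (color_ne_of_step hy).symm
    have hhi : (t.flipColor i).hi x = t.hi x :=
      hi_congr fun y hy => hne y (color_ne_of_step hy)
    have := t.lo_le_apply x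
    have := t.apply_le_hi x
    rw [flipColor_apply_of_eq _ hx, flipColor_apply_of_eq _ hx, hlo, hhi]
    omega
  · rw [flipColor_apply_of_ne _ hx, flipColor_apply_of_ne _ hx]

lemma rk_flipColor (i : N) (t : Labelling adj pos k) :
    (rk (t.flipColor i) : ℤ) = rk t - mwt i t := by
  rw [mwt_eq_sum, rk_eq_sum, rk_eq_sum, Finset.sum_filter]
  push_cast
  rw [← Finset.sum_sub_distrib]
  refine Finset.sum_congr rfl fun x _ => ?_
  split_ifs with hx
  · have := t.lo_le_apply x
    have := t.apply_le_hi x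
    rw [flipColor_apply_of_eq _ hx]
    omega
  · rw [flipColor_apply_of_ne _ hx, sub_zero]

end Recoloring

end Labelling

section TopWeight

open Labelling

variable [DecidableEq N] [DecidableRel adj]

/-- Comparing the ranks first keeps the evaluation in `decide` cheap. -/
instance : DecidableRel (step adj pos) := fun x y =>
  decidable_of_iff (y.2 = x.2 + 1 ∧ adj x.1 y.1 ∧ x ∈ pos ∧ y ∈ pos) (by unfold step; tauto)

/-- The weight of the maximum of `L(1)`: it counts the maximal positions of each color. -/
def topWeight (adj : N → N → Prop) (pos : Finset (N × ℕ)) [DecidableRel adj] : N → ℤ :=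
  fun i => Finset.card {x : pos | x.1.1 = i ∧ ∀ y : pos, ¬ step adj pos x y}

lemma topWeight_nonneg : 0 ≤ topWeight adj pos := fun _ => Int.natCast_nonneg _

lemma Labelling.wt_const [Std.Irrefl adj] :
    (const adj pos (le_refl k)).wt = k • topWeight adj pos := by
  funext i
  have hterm (x : pos) : 2 * ((const adj pos (le_refl k)).1 x : ℤ) -
      (const adj pos (le_refl k)).lo x - (const adj pos (le_refl k)).hi x =
        if ∀ y : pos, ¬ step adj pos x y then (k : ℤ) else 0 := by
    have hval (y : pos) : (const adj pos (le_refl k)).1 y = k := rfl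
    have hhi : (const adj pos (le_refl k)).hi x = k :=
      (hi_le _ x).antisymm (le_hi_iff.2 ⟨le_rfl, fun _ _ => le_rfl⟩)
    have hlo : (const adj pos (le_refl k)).lo x =
        if ∀ y : pos, ¬ step adj pos x y then 0 else k := by
      split_ifs with hmax
      · exact Nat.le_zero.1 (lo_le_iff.2 fun y hy => (hmax y hy).elim)
      · push Not at hmax
        obtain ⟨y, hy⟩ := hmax
        exact (lo_le_iff.2 fun _ _ => le_rfl).antisymm (apply_le_lo (const adj pos le_rfl) hy)
    rw [hval, hlo, hhi]
    split_ifs <;> push_cast <;> ring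
  rw [wt, mwt_eq_sum, Finset.sum_congr rfl fun x _ => hterm x, ← Finset.sum_filter,
    Finset.filter_filter, Finset.sum_const, Pi.smul_apply, topWeight, nsmul_eq_mul, nsmul_eq_mul,
    mul_comm]

end TopWeight

section Minuscule

/-- The positions form a minuscule colored poset for the Cartan matrix `A`: raising a label of
color `i` in a labelling by `{0, 1}` adds the simple root `A i` to its weight, and all these
weights have entries in `{-1, 0, 1}`. -/
structure IsMinuscule (A : N → N → ℤ) (adj : N → N → Prop) (pos : Finset (N × ℕ)) : Prop where
  diag (i : N) : A i i = 2
  wt_of_edge {i : N} {s t : Labelling adj pos 1} (h : edge i s t) : t.wt = s.wt + A i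
  abs_wt_le (t : Labelling adj pos 1) (i : N) : |t.wt i| ≤ 1

namespace IsMinuscule

open Labelling

variable {A : N → N → ℤ}

lemma wt_of_edge_apply (hA : IsMinuscule A adj pos) {i : N} {s t : Labelling adj pos 1}
    (h : edge i s t) : s.wt i = -1 ∧ t.wt i = 1 := by
  have hadd := congrFun (hA.wt_of_edge h) i
  rw [Pi.add_apply, hA.diag] at hadd
  have := abs_le.1 (hA.abs_wt_le s i)
  have := abs_le.1 (hA.abs_wt_le t i)
  omega

variable [Std.Irrefl adj]

lemma wt_eq_of_one (hA : IsMinuscule A adj pos) (t : Labelling adj pos 1) (j : N) :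
    t.wt j = (const adj pos (Nat.zero_le 1)).wt j + ∑ x, (t.1 x : ℤ) * A x.1.1 j := by
  induction hn : rk t generalizing t with
  | zero =>
    have h0 (x : pos) : t.1 x = 0 := by
      rw [rk_eq_sum, Finset.sum_eq_zero_iff] at hn
      exact hn x (Finset.mem_univ x)
    rw [show t = const adj pos (Nat.zero_le 1) from ext h0]
    simp [const, ofStep]
  | succ n ih =>
    obtain ⟨x, hx⟩ := t.exists_lo_lt_apply (by
      by_contra! h0
      simp [rk_eq_sum, h0] at hn)
    obtain ⟨s, hs⟩ := t.exists_edge_to hx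
    rw [hA.wt_of_edge hs, Pi.add_apply, ih s (by have := rk_of_edge hs; omega),
      sum_mul_of_edge hs fun c => A c j]
    ring

lemma wt_eq (hA : IsMinuscule A adj pos) (t : Labelling adj pos k) (j : N) :
    t.wt j = k * (const adj pos (Nat.zero_le 1)).wt j + ∑ x, (t.1 x : ℤ) * A x.1.1 j := by
  rw [wt_eq_sum_layer, Finset.sum_apply]
  simp_rw [hA.wt_eq_of_one (t.layer _) j]
  rw [Finset.sum_add_distrib, Finset.sum_const, Finset.card_range, nsmul_eq_mul, Finset.sum_comm]
  congr! 2 with x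
  rw [← sum_layer_apply t x, Nat.cast_sum, Finset.sum_mul]

lemma wt_sub_wt (hA : IsMinuscule A adj pos) {i : N} {s t : Labelling adj pos k}
    (hst : ∀ x : pos, x.1.1 ≠ i → s.1 x = t.1 x) :
    s.wt - t.wt = ((rk s : ℤ) - rk t) • A i := by
  funext j
  rw [Pi.sub_apply, hA.wt_eq s, hA.wt_eq t, add_sub_add_left_eq_sub, rk_eq_sum, rk_eq_sum,
    Pi.smul_apply, smul_eq_mul]
  push_cast
  rw [← Finset.sum_sub_distrib, ← Finset.sum_sub_distrib, Finset.sum_mul]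
  refine Finset.sum_congr rfl fun x _ => ?_
  by_cases hx : x.1.1 = i
  · rw [hx, sub_mul]
  · rw [hst x hx, sub_self, sub_self, zero_mul]

lemma wt_flipColor [DecidableEq N] (hA : IsMinuscule A adj pos) (i : N) (t : Labelling adj pos k) :
    (t.flipColor i).wt = t.wt - t.wt i • A i := by
  have h := hA.wt_sub_wt fun x hx => t.flipColor_apply_of_ne (i := i) (x := x) hx
  rw [rk_flipColor, sub_sub_cancel_left, neg_smul] at h
  rw [sub_eq_iff_eq_add.1 h, wt]
  abel

end IsMinuscule

end Minuscule

section Violation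

namespace Labelling

/-- The total weight of the layers of `t` from level `q` on. -/
def tailWt (t : Labelling adj pos k) (q : ℕ) : N → ℤ :=
  ∑ r ∈ Finset.Ico q k, (t.layer r).wt

/-- A violation of dominance: `q` is the highest level at which the total weight of the layers
from `q` on fails to be dominant, and it fails in the entry `i`. -/
structure IsViolation (t : Labelling adj pos k) (q : ℕ) (i : N) : Prop where
  lt : q < k
  neg : t.tailWt q i < 0
  nonneg {r : ℕ} (h : q < r) : 0 ≤ t.tailWt r

lemma tailWt_eq_add {q : ℕ} (hq : q < k) (t : Labelling adj pos k) :
    t.tailWt q = (t.layer q).wt + t.tailWt (q + 1) :=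
  Finset.sum_eq_sum_Ico_succ_bot hq _

lemma wt_eq_wt_trunc_add_tailWt [Std.Irrefl adj] {q : ℕ} (hq : q ≤ k) (t : Labelling adj pos k) :
    t.wt = (t.trunc q).wt + t.tailWt q := by
  rw [wt_eq_sum_layer t, wt_eq_sum_layer (t.trunc q), tailWt, ← Finset.sum_range_add_sum_Ico _ hq]
  congr 1
  exact Finset.sum_congr rfl fun r hr => by rw [layer_trunc (Finset.mem_range.1 hr)]

lemma IsViolation.level_unique {t : Labelling adj pos k} {q r : ℕ} {i j : N}
    (hi : t.IsViolation q i) (hj : t.IsViolation r j) : q = r := by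
  rcases lt_trichotomy q r with h | h | h
  · exact absurd hj.neg (hi.nonneg h j).not_gt
  · exact h
  · exact absurd hi.neg (hj.nonneg h i).not_gt

end Labelling

open Labelling

variable {A : N → N → ℤ} {t : Labelling adj pos k} {q : ℕ} {i : N}

/-- The tail weight drops by one entry at a time, so it is exactly `-1` where it first becomes
negative. -/
lemma IsMinuscule.wt_layer_of_isViolation (hA : IsMinuscule A adj pos) (h : t.IsViolation q i) :
    (t.layer q).wt i = -1 ∧ t.tailWt q i = -1 := by
  have hadd := congrFun (tailWt_eq_add h.lt t) i
  rw [Pi.add_apply] at hadd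
  have : 0 ≤ t.tailWt (q + 1) i := h.nonneg (Nat.lt_succ_self q) i
  have := abs_le.1 (hA.abs_wt_le (t.layer q) i)
  have := h.neg
  omega

variable [Std.Irrefl adj]

lemma IsMinuscule.lt_lo_of_isViolation (hA : IsMinuscule A adj pos) (h : t.IsViolation q i)
    {x : pos} (hx : x.1.1 = i) (hq : q < t.1 x) : q < t.lo x := by
  by_contra hlo
  obtain ⟨s, hs⟩ := (t.layer q).exists_edge_to (x := x) (by
    rw [lo_layer, layer_apply, if_neg hlo, if_pos hq]
    exact zero_lt_one)
  have hwt := (hA.wt_of_edge_apply hs).2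
  rw [hx, (hA.wt_layer_of_isViolation h).1] at hwt
  omega

lemma IsMinuscule.exists_isViolation (hA : IsMinuscule A adj pos)
    (ht : t ≠ const adj pos le_rfl) : ∃ q i, t.IsViolation q i := by
  obtain ⟨x, hx⟩ : ∃ x, t.1 x ≠ k := by
    contrapose! ht
    exact Labelling.ext ht
  have hxk := (t.2.1 x).lt_of_ne hx
  obtain ⟨y, hy⟩ := (t.layer (k - 1)).exists_apply_lt_hi ⟨x, by
    rw [layer_apply, if_neg (by omega)]
    exact zero_ne_one⟩
  obtain ⟨s, hs⟩ := exists_edge_from _ hy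
  refine ⟨k - 1, y.1.1, by omega, ?_, fun {r} hr => ?_⟩
  · rw [tailWt_eq_add (by omega), Pi.add_apply, (hA.wt_of_edge_apply hs).1, tailWt,
      Finset.Ico_eq_empty (by omega)]
    simp
  · rw [tailWt, Finset.Ico_eq_empty (by omega), Finset.sum_empty]

lemma IsMinuscule.not_isViolation_const (hA : IsMinuscule A adj pos) :
    ¬ (const adj pos (le_refl k)).IsViolation q i := by
  classical
  intro h
  have hlayer : (const adj pos (le_refl k)).layer q = const adj pos le_rfl :=
    Labelling.ext fun x => if_pos h.lt
  have hneg := (hA.wt_layer_of_isViolation h).1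
  rw [hlayer, wt_const, one_smul] at hneg
  exact (topWeight_nonneg i).not_gt (hneg.trans_lt neg_one_lt_zero)

variable [DecidableEq N]

namespace Labelling

/-- Flip color `i` in the part of `t` below level `q`, leaving the layers from `q` on alone. -/
def flipBelow (t : Labelling adj pos k) (q : ℕ) (i : N) (hq : q ≤ k) : Labelling adj pos k :=
  ofStep (fun x => (t.1 x - q) + ((t.trunc q).flipColor i).1 x)
    (fun x => by
      have := t.2.1 x
      have := ((t.trunc q).flipColor i).2.1 x
      omega)
    (fun _ _ hxy => Nat.add_le_add (Nat.sub_le_sub_right (t.apply_le_of_step hxy) q)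
      (((t.trunc q).flipColor i).apply_le_of_step hxy))

lemma flipBelow_apply (hq : q ≤ k) (x : pos) :
    (t.flipBelow q i hq).1 x = (t.1 x - q) + ((t.trunc q).flipColor i).1 x := rfl

lemma flipBelow_apply_of_ne (hq : q ≤ k) {x : pos} (hx : x.1.1 ≠ i) :
    (t.flipBelow q i hq).1 x = t.1 x := by
  rw [flipBelow_apply, flipColor_apply_of_ne _ hx, trunc_apply]
  omega

lemma rk_flipBelow (hq : q ≤ k) :
    (rk (t.flipBelow q i hq) : ℤ) = rk t - (t.trunc q).wt i := by
  have hsplit : rk (t.flipBelow q i hq) + rk (t.trunc q) = rk t + rk ((t.trunc q).flipColor i) := by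
    simp only [rk_eq_sum, ← Finset.sum_add_distrib]
    refine Finset.sum_congr rfl fun x _ => ?_
    rw [flipBelow_apply, trunc_apply]
    omega
  have := rk_flipColor i (t.trunc q)
  rw [wt]
  omega

end Labelling

namespace IsMinuscule

/-- At a violation, the color-`i` labels above level `q` are pinned at `q` in the truncation, so
flipping the truncation does not interfere with the upper layers. -/
lemma flipColor_trunc_apply (hA : IsMinuscule A adj pos) (h : t.IsViolation q i)
    {x : pos} (hq : q < t.1 x) : ((t.trunc q).flipColor i).1 x = q := by
  by_cases hx : x.1.1 = i
  · have hlo : (t.trunc q).lo x = q := by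
      refine ((lo_le_apply _ x).trans (min_le_right _ _)).antisymm ?_
      by_contra hlt
      refine (hA.lt_lo_of_isViolation h hx hq).not_ge (lo_le_iff.2 fun y hy => ?_)
      have := (t.trunc q).apply_le_lo hy
      rw [trunc_apply] at this
      omega
    have := (t.trunc q).lo_le_apply x
    have := (t.trunc q).apply_le_hi x
    have := (t.trunc q).hi_le x
    rw [flipColor_apply_of_eq _ hx]
    omega
  · rw [flipColor_apply_of_ne _ hx, trunc_apply]
    omega

lemma layer_flipBelow (hA : IsMinuscule A adj pos) (h : t.IsViolation q i) {r : ℕ} (hr : q ≤ r) :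
    (t.flipBelow q i h.lt.le).layer r = t.layer r := by
  refine Labelling.ext fun x => ?_
  have := ((t.trunc q).flipColor i).2.1 x
  have := hA.flipColor_trunc_apply h (x := x)
  simp only [layer_apply, flipBelow_apply]
  grind

lemma trunc_flipBelow (hA : IsMinuscule A adj pos) (h : t.IsViolation q i) :
    (t.flipBelow q i h.lt.le).trunc q = (t.trunc q).flipColor i := by
  refine Labelling.ext fun x => ?_
  have := ((t.trunc q).flipColor i).2.1 x
  have := hA.flipColor_trunc_apply h (x := x)
  rw [trunc_apply, flipBelow_apply]
  omega

lemma flipBelow_flipBelow (hA : IsMinuscule A adj pos) (h : t.IsViolation q i) :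
    (t.flipBelow q i h.lt.le).flipBelow q i h.lt.le = t := by
  refine Labelling.ext fun x => ?_
  have := ((t.trunc q).flipColor i).2.1 x
  have := hA.flipColor_trunc_apply h (x := x)
  rw [flipBelow_apply, hA.trunc_flipBelow h, flipColor_flipColor, flipBelow_apply, trunc_apply]
  omega

lemma wt_flipBelow_add_one (hA : IsMinuscule A adj pos) (h : t.IsViolation q i) :
    (t.flipBelow q i h.lt.le).wt + 1 = (t.wt + 1) - (t.wt + 1) i • A i := by
  have hsub := hA.wt_sub_wt fun x hx => t.flipBelow_apply_of_ne (i := i) (x := x) h.lt.le hx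
  have htrunc := congrFun (wt_eq_wt_trunc_add_tailWt h.lt.le t) i
  rw [Pi.add_apply, (hA.wt_layer_of_isViolation h).2] at htrunc
  rw [rk_flipBelow, sub_sub_cancel_left, show (t.trunc q).wt i = t.wt i + 1 by omega,
    neg_smul] at hsub
  rw [sub_eq_iff_eq_add.1 hsub, Pi.add_apply, Pi.one_apply]
  abel

lemma tailWt_flipBelow (hA : IsMinuscule A adj pos) (h : t.IsViolation q i) {r : ℕ} (hr : q ≤ r) :
    (t.flipBelow q i h.lt.le).tailWt r = t.tailWt r :=
  Finset.sum_congr rfl fun _ hs => by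
    rw [hA.layer_flipBelow h (hr.trans (Finset.mem_Ico.1 hs).1)]

lemma isViolation_flipBelow_iff (hA : IsMinuscule A adj pos) (h : t.IsViolation q i) {r : ℕ}
    {j : N} : (t.flipBelow q i h.lt.le).IsViolation r j ↔ t.IsViolation r j := by
  have hlevel (j : N) : (t.flipBelow q i h.lt.le).IsViolation q j ↔ t.IsViolation q j := by
    have htail {r : ℕ} := hA.tailWt_flipBelow h (r := r)
    constructor <;> refine fun hj => ⟨hj.lt, ?_, fun {r} hr => ?_⟩
    · exact htail le_rfl ▸ hj.neg
    · exact htail hr.le ▸ hj.nonneg hr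
    · exact (htail le_rfl).symm ▸ hj.neg
    · exact (htail hr.le).symm ▸ hj.nonneg hr
  constructor <;> intro hj
  · obtain rfl := hj.level_unique ((hlevel i).2 h)
    exact (hlevel j).1 hj
  · obtain rfl := hj.level_unique h
    exact (hlevel j).2 hj

end IsMinuscule

open Classical in
/-- The sign-reversing involution: flip below some chosen violation of dominance, if any. -/
def Labelling.cancel (t : Labelling adj pos k) : Labelling adj pos k :=
  if h : ∃ p : ℕ × N, t.IsViolation p.1 p.2 then
    t.flipBelow h.choose.1 h.choose.2 h.choose_spec.lt.le
  else t

namespace IsMinuscule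

/-- The chosen violation depends on the set of violations only. -/
lemma exists_forall_cancel_eq (h : ∃ q i, t.IsViolation q i) :
    ∃ q i, ∃ h : t.IsViolation q i, ∀ s : Labelling adj pos k,
      (∀ r j, s.IsViolation r j ↔ t.IsViolation r j) → s.cancel = s.flipBelow q i h.lt.le := by
  have hex : ∃ p : ℕ × N, t.IsViolation p.1 p.2 := by simpa using h
  refine ⟨hex.choose.1, hex.choose.2, hex.choose_spec, fun s hs => ?_⟩
  have hst : (fun p : ℕ × N => s.IsViolation p.1 p.2) = fun p => t.IsViolation p.1 p.2 :=
    funext fun p => propext (hs p.1 p.2)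
  simp only [cancel, hst, hex, dif_pos]

lemma exists_cancel_eq (hA : IsMinuscule A adj pos) (h : ∃ q i, t.IsViolation q i) :
    ∃ q i, ∃ h : t.IsViolation q i, t.cancel = t.flipBelow q i h.lt.le ∧ t.cancel.cancel = t := by
  obtain ⟨q, i, hv, hcancel⟩ := exists_forall_cancel_eq h
  refine ⟨q, i, hv, hcancel t fun _ _ => Iff.rfl, ?_⟩
  rw [hcancel t fun _ _ => Iff.rfl, hcancel _ fun _ _ => hA.isViolation_flipBelow_iff hv,
    hA.flipBelow_flipBelow hv]

lemma cancel_cancel (hA : IsMinuscule A adj pos) (h : ∃ q i, t.IsViolation q i) :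
    t.cancel.cancel = t := by
  obtain ⟨_, _, _, _, hcancel⟩ := hA.exists_cancel_eq h
  exact hcancel

lemma exists_isViolation_cancel (hA : IsMinuscule A adj pos) (h : ∃ q i, t.IsViolation q i) :
    ∃ q i, t.cancel.IsViolation q i := by
  obtain ⟨q, i, hv, hcancel, -⟩ := hA.exists_cancel_eq h
  exact ⟨q, i, hcancel ▸ (hA.isViolation_flipBelow_iff hv).2 hv⟩

lemma exists_wt_cancel_add_one (hA : IsMinuscule A adj pos) (h : ∃ q i, t.IsViolation q i) :
    ∃ i, t.cancel.wt + 1 = (t.wt + 1) - (t.wt + 1) i • A i := by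
  obtain ⟨q, i, hv, hcancel, -⟩ := hA.exists_cancel_eq h
  exact ⟨i, hcancel ▸ hA.wt_flipBelow_add_one hv⟩

end IsMinuscule

end Violation

section Weyl

open Labelling

lemma eq_zero_of_eq_neg {a : AddMonoidAlgebra ℤ (N → ℤ)} (h : a = -a) : a = 0 := by
  ext μ
  exact self_eq_neg.1 (congrArg (fun b : AddMonoidAlgebra ℤ (N → ℤ) => b.coeff μ) h)

variable [DecidableEq N] [Fintype N] {A : N → N → ℤ}

lemma refl_mulVec (i : N) (μ : N → ℤ) : (refl A i).mulVec μ = μ - μ i • A i := by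
  funext j
  simp [refl, Matrix.mulVec, dotProduct, sub_mul, Finset.sum_sub_distrib, mul_comm (A i j)]

lemma refl_mul_refl {i : N} (hi : A i i = 2) : refl A i * refl A i = 1 := by
  refine Matrix.mulVec_injective (funext fun μ => ?_)
  rw [← Matrix.mulVec_mulVec, refl_mulVec, refl_mulVec, Matrix.one_mulVec, Pi.sub_apply,
    Pi.smul_apply, hi]
  module

lemma det_refl {i : N} (hi : A i i = 2) : (refl A i).det = -1 := by
  have hrank_one : refl A i = 1 + Matrix.replicateCol Unit (-A i) *
      Matrix.replicateRow Unit (Pi.single i (1 : ℤ)) := by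
    ext j l
    by_cases hl : l = i <;> simp [refl, Matrix.mul_apply, Matrix.one_apply, hl, sub_eq_add_neg]
  rw [hrank_one, Matrix.det_one_add_replicateCol_mul_replicateRow, single_one_dotProduct,
    Pi.neg_apply, hi]
  norm_num

lemma alt_eq_sum (hW : (weyl A : Set (Matrix N N ℤ)).Finite) (ν : N → ℤ) :
    alt A ν = ∑ w ∈ hW.toFinset, AddMonoidAlgebra.single (w.mulVec ν) w.det :=
  finsum_mem_eq_finite_toFinset_sum _ _

lemma alt_refl_mulVec (hW : (weyl A : Set (Matrix N N ℤ)).Finite) {i : N} (hi : A i i = 2)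
    (ν : N → ℤ) : alt A ((refl A i).mulVec ν) = -alt A ν := by
  have hmul_mem : ∀ w ∈ hW.toFinset, w * refl A i ∈ hW.toFinset := by
    simp only [Set.Finite.mem_toFinset, SetLike.mem_coe]
    exact fun w hw => mul_mem hw (Submonoid.subset_closure ⟨i, rfl⟩)
  have hmul_mul : ∀ w ∈ hW.toFinset, w * refl A i * refl A i = w := fun w _ => by
    rw [mul_assoc, refl_mul_refl hi, mul_one]
  rw [alt_eq_sum hW, alt_eq_sum hW, ← Finset.sum_neg_distrib]
  refine Finset.sum_nbij' (· * refl A i) (· * refl A i) hmul_mem hmul_mem hmul_mul hmul_mul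
    fun w _ => ?_
  rw [Matrix.mulVec_mulVec, Matrix.det_mul, det_refl hi, mul_neg_one, AddMonoidAlgebra.single_neg,
    neg_neg]

variable [Std.Irrefl adj]

namespace IsMinuscule

lemma exists_perm_wt (hA : IsMinuscule A adj pos) (k : ℕ) {w : Matrix N N ℤ} (hw : w ∈ weyl A) :
    ∃ σ : Equiv.Perm (Labelling adj pos k), ∀ t, (σ t).wt = w.mulVec t.wt := by
  unfold weyl at hw
  induction hw using Submonoid.closure_induction with
  | mem w hw =>
    obtain ⟨i, rfl⟩ := hw
    exact ⟨Function.Involutive.toPerm _ (flipColor_flipColor i), fun t =>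
      (hA.wt_flipColor i t).trans (refl_mulVec i _).symm⟩
  | one => exact ⟨1, fun t => (Matrix.one_mulVec _).symm⟩
  | mul v w _ _ hv hw =>
    obtain ⟨σ, hσ⟩ := hv
    obtain ⟨τ, hτ⟩ := hw
    refine ⟨σ * τ, fun t => ?_⟩
    rw [Equiv.Perm.mul_apply, hσ, hτ, Matrix.mulVec_mulVec]

/-- The elements of `W` permute the finitely many weights of `L(1)`, and these span, because their
differences along edges are the simple roots. -/
lemma finite_weyl (hA : IsMinuscule A adj pos) (hdet : (Matrix.of A).det ≠ 0)
    (hcolor : ∀ i, ∃ x : pos, x.1.1 = i) : (weyl A : Set (Matrix N N ℤ)).Finite := by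
  let weights : Set (N → ℤ) := Set.range (wt : Labelling adj pos 1 → N → ℤ)
  let act (w : Matrix N N ℤ) (t : Labelling adj pos 1) : N → ℤ := w.mulVec t.wt
  have hmaps : Set.MapsTo act (weyl A) (Set.univ.pi fun _ => weights) := fun w hw t _ => by
    obtain ⟨σ, hσ⟩ := hA.exists_perm_wt 1 hw
    exact ⟨σ t, hσ t⟩
  have hinj : Set.InjOn act (weyl A) := fun v _ w _ hvw => by
    have hroot (i : N) : v.mulVec (A i) = w.mulVec (A i) := by
      obtain ⟨x, rfl⟩ := hcolor i
      obtain ⟨s, t, hst⟩ := exists_edge (adj := adj) x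
      rw [← sub_eq_iff_eq_add'.2 (hA.wt_of_edge hst), Matrix.mulVec_sub, Matrix.mulVec_sub]
      exact congrArg₂ _ (congrFun hvw t) (congrFun hvw s)
    have hreg : IsRegular (Matrix.of A).transpose :=
      Matrix.isRegular_of_isLeftRegular_det (by
        rw [Matrix.det_transpose]
        exact (IsRegular.of_ne_zero hdet).left)
    refine hreg.right (Matrix.ext fun j i => ?_)
    exact congrFun (hroot i) j
  exact .of_injOn hmaps hinj (.pi fun _ => Set.finite_range _)

lemma alt_one_mul_wgf (hA : IsMinuscule A adj pos) (hW : (weyl A : Set (Matrix N N ℤ)).Finite)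
    (k : ℕ) : alt A 1 * wgf adj pos k (fun _ => True) =
      ∑ t : Labelling adj pos k, alt A (t.wt + 1) := by
  simp only [alt_eq_sum hW, wgf]
  rw [Finset.sum_mul, Finset.sum_comm]
  refine Finset.sum_congr rfl fun w hw => ?_
  obtain ⟨σ, hσ⟩ := hA.exists_perm_wt k ((Set.Finite.mem_toFinset hW).1 hw)
  rw [← Equiv.sum_comp σ, Finset.mul_sum]
  refine Finset.sum_congr rfl fun t _ => ?_
  change _ * AddMonoidAlgebra.single (σ t).wt 1 = _
  rw [AddMonoidAlgebra.single_mul_single, hσ, ← Matrix.mulVec_add, mul_one, add_comm]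

lemma sum_alt_wt_add_one [DecidableRel adj] (hA : IsMinuscule A adj pos)
    (hW : (weyl A : Set (Matrix N N ℤ)).Finite) (k : ℕ) :
    ∑ t : Labelling adj pos k, alt A (t.wt + 1) = alt A (k • topWeight adj pos + 1) := by
  classical
  set T := const adj pos (le_refl k)
  have hviol (t : Labelling adj pos k) (ht : t ∈ Finset.univ.erase T) : ∃ q i, t.IsViolation q i :=
    hA.exists_isViolation (Finset.ne_of_mem_erase ht)
  have halt (t : Labelling adj pos k) (ht : t ∈ Finset.univ.erase T) :
      alt A (t.cancel.wt + 1) = -alt A (t.wt + 1) := by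
    obtain ⟨i, hi⟩ := hA.exists_wt_cancel_add_one (hviol t ht)
    rw [hi, ← refl_mulVec, alt_refl_mulVec hW (hA.diag i)]
  rw [← Finset.add_sum_erase _ _ (Finset.mem_univ T), wt_const]
  refine add_eq_left.2 (Finset.sum_involution (fun t _ => t.cancel) (fun t ht => ?_)
    (fun t ht hne (hfix : t.cancel = t) => ?_) (fun t ht => ?_)
    fun t ht => hA.cancel_cancel (hviol t ht))
  · rw [halt t ht, add_neg_cancel]
  · exact hne (eq_zero_of_eq_neg (by rw [← halt t ht, hfix]))
  · refine Finset.mem_erase.2 ⟨fun hT => ?_, Finset.mem_univ _⟩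
    obtain ⟨q, i, h⟩ := hA.exists_isViolation_cancel (hviol t ht)
    exact hA.not_isViolation_const (hT ▸ h)

end IsMinuscule

end Weyl

section Local

open Labelling

/-- The Cartan matrix of the simply laced Dynkin diagram with adjacency `adj`. -/
def cartan [DecidableEq N] (adj : N → N → Prop) [DecidableRel adj] (i j : N) : ℤ :=
  if i = j then 2 else if adj i j then -1 else 0

/-- Local axioms for a minuscule poset colored by a simply laced diagram: positions of equal color
form a chain, and if the color `i` is adjacent to that of `z`, then either `z` is one of the two
elements strictly between two positions of color `i`, or `z` lies on one side of a position of
color `i` only, and is its only neighbor there. -/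
structure IsMinusculePoset (adj : N → N → Prop) (pos : Finset (N × ℕ)) : Prop where
  symm {i j : N} (h : adj i j) : adj j i
  ple_or_ple (x y : pos) (h : x.1.1 = y.1.1) : ple adj pos x y ∨ ple adj pos y x
  neighbors (z : pos) (i : N) (h : adj z.1.1 i) :
    (∃ x : pos, x.1.1 = i ∧ ∃ w ≠ z, (∀ u : pos, step adj pos x u ↔ u = z ∨ u = w) ∧
      ∃ y : pos, y.1.1 = i ∧ ∀ u : pos, step adj pos u y ↔ u = z ∨ u = w) ∨
    (∃ x : pos, x.1.1 = i ∧ (∀ u : pos, step adj pos x u ↔ u = z) ∧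
      ∀ y : pos, y.1.1 = i → ¬ step adj pos z y) ∨
    (∃ y : pos, y.1.1 = i ∧ (∀ u : pos, step adj pos u y ↔ u = z) ∧
      ∀ x : pos, x.1.1 = i → ¬ step adj pos x z)

lemma eq_of_step_of_step {i : N} {x u z : pos} (hx : x.1.1 = i) (hu : u.1.1 = i)
    (hxz : step adj pos x z) (huz : step adj pos u z) : u = x :=
  Subtype.ext (Prod.ext (hu.trans hx.symm) (by have := hxz.2.2.2; have := huz.2.2.2; omega))

lemma eq_of_step_of_step' {i : N} {y u z : pos} (hy : y.1.1 = i) (hu : u.1.1 = i)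
    (hzy : step adj pos z y) (hzu : step adj pos z u) : u = y :=
  Subtype.ext (Prod.ext (hu.trans hy.symm) (by have := hzy.2.2.2; have := hzu.2.2.2; omega))

section Sums

variable [DecidableEq N] {i : N} {s t : Labelling adj pos k} {z : pos}

lemma sum_lo_sub_lo (hst : ∀ y, y ≠ z → t.1 y = s.1 y) {x : pos} (hx : x.1.1 = i)
    (hxz : step adj pos x z) :
    ∑ u : pos with u.1.1 = i, ((t.lo u : ℤ) - s.lo u) = t.lo x - s.lo x := by
  refine Finset.sum_eq_single_of_mem x (by simpa using hx) fun u hu hux => ?_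
  rw [lo_congr fun y hy => hst y ?_, sub_self]
  rintro rfl
  exact hux (eq_of_step_of_step hx (Finset.mem_filter.1 hu).2 hxz hy)

lemma sum_lo_sub_lo_eq_zero (hst : ∀ y, y ≠ z → t.1 y = s.1 y)
    (hz : ∀ x : pos, x.1.1 = i → ¬ step adj pos x z) :
    ∑ u : pos with u.1.1 = i, ((t.lo u : ℤ) - s.lo u) = 0 := by
  refine Finset.sum_eq_zero fun u hu => ?_
  rw [lo_congr fun y hy => hst y ?_, sub_self]
  rintro rfl
  exact hz u (Finset.mem_filter.1 hu).2 hy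

lemma sum_hi_sub_hi (hst : ∀ y, y ≠ z → t.1 y = s.1 y) {y : pos} (hy : y.1.1 = i)
    (hzy : step adj pos z y) :
    ∑ u : pos with u.1.1 = i, ((t.hi u : ℤ) - s.hi u) = t.hi y - s.hi y := by
  refine Finset.sum_eq_single_of_mem y (by simpa using hy) fun u hu huy => ?_
  rw [hi_congr fun x hx => hst x ?_, sub_self]
  rintro rfl
  exact huy (eq_of_step_of_step' hy (Finset.mem_filter.1 hu).2 hzy hx)

lemma sum_hi_sub_hi_eq_zero (hst : ∀ y, y ≠ z → t.1 y = s.1 y)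
    (hz : ∀ y : pos, y.1.1 = i → ¬ step adj pos z y) :
    ∑ u : pos with u.1.1 = i, ((t.hi u : ℤ) - s.hi u) = 0 := by
  refine Finset.sum_eq_zero fun u hu => ?_
  rw [hi_congr fun x hx => hst x ?_, sub_self]
  rintro rfl
  exact hz u (Finset.mem_filter.1 hu).2 hx

lemma wt_sub_wt_eq_sum [Std.Irrefl adj] : t.wt i - s.wt i =
    2 * ∑ u : pos with u.1.1 = i, ((t.1 u : ℤ) - s.1 u) -
      ∑ u : pos with u.1.1 = i, ((t.lo u : ℤ) - s.lo u) -
      ∑ u : pos with u.1.1 = i, ((t.hi u : ℤ) - s.hi u) := by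
  rw [wt, wt, mwt_eq_sum, mwt_eq_sum, Finset.mul_sum, ← Finset.sum_sub_distrib,
    ← Finset.sum_sub_distrib, ← Finset.sum_sub_distrib]
  exact Finset.sum_congr rfl fun u _ => by ring

end Sums

lemma lo_eq_max {t : Labelling adj pos k} {x z w : pos}
    (h : ∀ u : pos, step adj pos x u ↔ u = z ∨ u = w) : t.lo x = max (t.1 z) (t.1 w) :=
  eq_of_forall_ge_iff fun b => by simp [lo_le_iff, h]

lemma hi_eq_min {t : Labelling adj pos k} {y z w : pos}
    (h : ∀ u : pos, step adj pos u y ↔ u = z ∨ u = w) : t.hi y = min (t.1 z) (t.1 w) :=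
  eq_of_forall_le_iff fun b => by
    have := t.2.1 z
    simp [le_hi_iff, h]
    omega

/-- A chain from `x` to `y` leaves `x` through a label bounded by `lo x` and enters `y` through a
label that bounds `hi y`. -/
lemma hi_le_lo_of_ple [Std.Irrefl adj] (t : Labelling adj pos k) {x y : pos}
    (h : ple adj pos x y) (hne : x ≠ y)
    (hc : x.1.1 = y.1.1) : t.hi y ≤ t.lo x := by
  obtain he | ⟨u, hxu, huy⟩ := Relation.ReflTransGen.cases_head h
  · exact absurd (Subtype.ext he) hne
  obtain rfl | ⟨v, huv, hvy⟩ := Relation.ReflTransGen.cases_tail huy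
  · exact absurd hc (color_ne_of_step hxu)
  calc t.hi y ≤ t.1 ⟨v, hvy.1⟩ := t.hi_le_apply (y := ⟨v, hvy.1⟩) hvy
    _ ≤ t.1 ⟨u, hxu.2.1⟩ := t.2.2.1 ⟨v, hvy.1⟩ ⟨u, hxu.2.1⟩ huv
    _ ≤ t.lo x := t.apply_le_lo (y := ⟨u, hxu.2.1⟩) hxu

namespace IsMinusculePoset

variable {s t : Labelling adj pos 1} {z : pos} {i : N}

lemma sum_lo_add_sum_hi_eq_one [DecidableEq N] (hP : IsMinusculePoset adj pos)
    (hz : t.1 z = s.1 z + 1) (hst : ∀ y, y ≠ z → t.1 y = s.1 y) (h : adj z.1.1 i) :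
    ∑ u : pos with u.1.1 = i, ((t.lo u : ℤ) - s.lo u) +
      ∑ u : pos with u.1.1 = i, ((t.hi u : ℤ) - s.hi u) = 1 := by
  have hz1 := t.2.1 z
  rcases hP.neighbors z i h with
    ⟨x, hx, w, hwz, hxu, y, hy, huy⟩ | ⟨x, hx, hxu, hzi⟩ | ⟨y, hy, huy, hzi⟩
  · have hw := hst w hwz
    have hw1 := t.2.1 w
    rw [sum_lo_sub_lo hst hx ((hxu z).2 (.inl rfl)), sum_hi_sub_hi hst hy ((huy z).2 (.inl rfl)),
      lo_eq_max hxu, lo_eq_max hxu, hi_eq_min huy, hi_eq_min huy]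
    omega
  · have hxu' (u : pos) : step adj pos x u ↔ u = z ∨ u = z := (hxu u).trans or_self_iff.symm
    rw [sum_lo_sub_lo hst hx ((hxu z).2 rfl), sum_hi_sub_hi_eq_zero hst hzi, lo_eq_max hxu',
      lo_eq_max hxu']
    omega
  · have huy' (u : pos) : step adj pos u y ↔ u = z ∨ u = z := (huy u).trans or_self_iff.symm
    rw [sum_hi_sub_hi hst hy ((huy z).2 rfl), sum_lo_sub_lo_eq_zero hst hzi, hi_eq_min huy',
      hi_eq_min huy']
    omega

variable [Std.Irrefl adj]

lemma wt_of_edge [DecidableEq N] [DecidableRel adj] (hP : IsMinusculePoset adj pos)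
    (h : edge i s t) : t.wt = s.wt + cartan adj i := by
  obtain ⟨z, rfl, hz, hst⟩ := h
  have hsum {j : N} (hj : z.1.1 ≠ j) : ∑ u : pos with u.1.1 = j, ((t.1 u : ℤ) - s.1 u) = 0 :=
    Finset.sum_eq_zero fun u hu => by
      rw [hst u (by rintro rfl; exact hj (Finset.mem_filter.1 hu).2), sub_self]
  funext j
  rw [Pi.add_apply, ← sub_eq_iff_eq_add', wt_sub_wt_eq_sum, cartan]
  split_ifs with hj hadj
  · have hzs : ∑ u : pos with u.1.1 = j, ((t.1 u : ℤ) - s.1 u) = 1 := by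
      rw [Finset.sum_eq_single_of_mem z (by simpa using hj)
        fun u _ hu => by rw [hst u hu, sub_self], hz]
      push_cast
      ring
    rw [hzs, sum_lo_sub_lo_eq_zero hst fun x hx hxz => color_ne_of_step hxz (hx.trans hj.symm),
      sum_hi_sub_hi_eq_zero hst fun x hx hzx => color_ne_of_step hzx (hj.trans hx.symm)]
    norm_num
  · have := hP.sum_lo_add_sum_hi_eq_one hz hst hadj
    rw [hsum hj]
    omega
  · rw [hsum hj, sum_lo_sub_lo_eq_zero hst fun x hx hxz =>
        hadj (hP.symm (by rw [← hx]; exact hxz.2.2.1)),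
      sum_hi_sub_hi_eq_zero hst fun x hx hzx => hadj (by rw [← hx]; exact hzx.2.2.1)]
    norm_num

lemma abs_wt_le (hP : IsMinusculePoset adj pos) (t : Labelling adj pos 1) (i : N) :
    |t.wt i| ≤ 1 := by
  classical
  have hbound (x : pos) : t.lo x ≤ t.1 x ∧ t.1 x ≤ t.hi x ∧ t.hi x ≤ 1 :=
    ⟨t.lo_le_apply x, t.apply_le_hi x, t.hi_le x⟩
  rw [wt, mwt_eq_sum]
  by_cases hfree : ∃ x : pos, x.1.1 = i ∧ t.lo x < t.hi x
  · obtain ⟨x, hx, hlt⟩ := hfree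
    rw [Finset.sum_eq_single_of_mem x (by simpa using hx) fun y hy hyx => ?_]
    · have := hbound x
      exact abs_le.2 ⟨by omega, by omega⟩
    · have hyx' : y.1.1 = x.1.1 := (Finset.mem_filter.1 hy).2.trans hx.symm
      have := hbound x
      have := hbound y
      rcases hP.ple_or_ple x y hyx'.symm with h | h
      · have := hi_le_lo_of_ple t h hyx.symm hyx'.symm
        omega
      · have := hi_le_lo_of_ple t h hyx hyx'
        omega
  · push Not at hfree
    rw [Finset.sum_eq_zero fun x hx => ?_]
    · norm_num
    · have := hbound x
      have := hfree x (Finset.mem_filter.1 hx).2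
      omega

theorem isMinuscule [DecidableEq N] [DecidableRel adj] (hP : IsMinusculePoset adj pos) :
    IsMinuscule (cartan adj) adj pos where
  diag _ := if_pos rfl
  wt_of_edge := hP.wt_of_edge
  abs_wt_le := hP.abs_wt_le

end IsMinusculePoset

end Local

section Chain

/-- `Chain adj pos n x y`: some path of `n` steps leads from `x` to `y`. For `n = y.2 - x.2` this is
a decidable form of `ple adj pos x y`. -/
def Chain (adj : N → N → Prop) (pos : Finset (N × ℕ)) : ℕ → N × ℕ → N × ℕ → Prop
  | 0, x, y => x = y
  | n + 1, x, y => ∃ z ∈ pos, step adj pos x z ∧ Chain adj pos n z y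

instance Chain.instDecidable [DecidableEq N] [DecidableRel adj] :
    ∀ n x y, Decidable (Chain adj pos n x y)
  | 0, x, y => inferInstanceAs (Decidable (x = y))
  | n + 1, x, y =>
    have (z : N × ℕ) : Decidable (Chain adj pos n z y) := Chain.instDecidable n z y
    inferInstanceAs (Decidable (∃ z ∈ pos, step adj pos x z ∧ Chain adj pos n z y))

lemma Chain.ple : ∀ {n : ℕ} {x y : N × ℕ}, Chain adj pos n x y → ple adj pos x y
  | 0, _, _, h => Eq.subst h .refl
  | _ + 1, _, _, ⟨_, _, hxz, hzy⟩ => .head hxz hzy.ple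

end Chain

end Labelling

end CL

open CL in
theorem statement_4_general {N : Type} [DecidableEq N] [Fintype N] {A : N → N → ℤ}
    {adj : N → N → Prop} [DecidableRel adj] [Std.Irrefl adj] {pos : Finset (N × ℕ)}
    (hA : IsMinuscule A adj pos) (hdet : (Matrix.of A).det ≠ 0)
    (hcolor : ∀ i, ∃ x : pos, x.1.1 = i) (k : ℕ) :
    (weyl A : Set (Matrix N N ℤ)).Finite ∧
      alt A 1 * wgf adj pos k (fun _ => True) = alt A (k • topWeight adj pos + 1) :=
  have hW := hA.finite_weyl hdet hcolor
  ⟨hW, (hA.alt_one_mul_wgf hW k).trans (hA.sum_alt_wt_add_one hW k)⟩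

section E7

open CL Labelling

instance : Std.Irrefl adj7 where
  irrefl := by decide

set_option synthInstance.maxSize 2048 in
lemma isMinusculePoset_pos7 : IsMinusculePoset adj7 pos7 where
  symm := by intro i j; exact Or.symm
  ple_or_ple := by
    have : ∀ x ∈ pos7, ∀ y ∈ pos7, x.1 = y.1 → x.2 ≤ y.2 →
        Chain adj7 pos7 (y.2 - x.2) x y := by
      decide +kernel
    intro x y h
    exact (le_total x.1.2 y.1.2).imp (fun hxy => (this x x.2 y y.2 h hxy).ple)
      fun hyx => (this y y.2 x x.2 h.symm hyx).ple
  neighbors := by decide +kernel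

lemma det_A7_ne_zero : (Matrix.of A7).det ≠ 0 := by
  intro hdet
  obtain ⟨v, hv, hAv⟩ := Matrix.exists_mulVec_eq_zero_iff.2 hdet
  have huniv : (Finset.univ : Finset N7) = {n1, n2, n3, n4, n5, n5p, n6p} := rfl
  have hrow (i : N7) : ∑ j, A7 i j * v j = 0 := congrFun hAv i
  have h1 : 2 * v n1 + -v n2 = 0 := by simpa [huniv, A7, adj7] using hrow n1
  have h2 : -v n1 + (2 * v n2 + -v n3) = 0 := by simpa [huniv, A7, adj7] using hrow n2
  have h3 : -v n2 + (2 * v n3 + -v n4) = 0 := by simpa [huniv, A7, adj7] using hrow n3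
  have h4 : -v n3 + (2 * v n4 + (-v n5 + -v n5p)) = 0 := by
    simpa [huniv, A7, adj7] using hrow n4
  have h5 : -v n4 + 2 * v n5 = 0 := by simpa [huniv, A7, adj7] using hrow n5
  have h5p : -v n4 + (2 * v n5p + -v n6p) = 0 := by simpa [huniv, A7, adj7] using hrow n5p
  have h6p : -v n5p + 2 * v n6p = 0 := by simpa [huniv, A7, adj7] using hrow n6p
  refine hv (funext fun j => ?_)
  cases j <;> simp only [Pi.zero_apply] <;> omega

lemma exists_color_eq (i : N7) : ∃ x : pos7, x.1.1 = i := by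
  revert i; decide +kernel

lemma topWeight_pos7 : topWeight adj7 pos7 = Pi.single n1 1 := by
  decide +kernel

end E7

/-- the Weyl group of `E₇` is finite and
`𝒜(Z^ϱ)·WGF(L7(k);Z) = 𝒜(Z^{kω₁+ϱ})` in `ℤ[ℤ^7]`. -/
theorem statement_4 (k : ℕ) :
    ((CL.weyl A7 : Set (Matrix N7 N7 ℤ)).Finite) ∧
    CL.alt A7 (fun _ => 1) * CL.wgf adj7 pos7 k (fun _ => True) =
      CL.alt A7 (fun j => (if j = n1 then (k : ℤ) else 0) + 1) := by
  have htop : k • CL.topWeight adj7 pos7 + 1 = fun j => (if j = n1 then (k : ℤ) else 0) + 1 := by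
    funext j
    simp [topWeight_pos7, Pi.single_apply]
  rw [← htop]
  exact statement_4_general isMinusculePoset_pos7.isMinuscule det_A7_ne_zero exists_color_eq k

end
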